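/- For integers $r \geq 1$, $m \geq 0$ and real $x$ with $|x|$ sufficiently small, the generating function $G_r(x) = \sum_{k=0}^{\infty} T_{r,k} x^k$ of the alternating sums $T_{r,k} = \sum_{k_1+\cdots+k_{r+1}=k} (-1)^{k_{r+1}} \xi(k_1+1,\ldots,k_r+1;k_{r+1}+1)$ satisfies $G_r(x) = \sum_{l=1}^{\infty} \frac{1}{l}\, \frac{\Gamma(l-x)\Gamma(l+x)}{\Gamma(l)^2}\, \frac{1}{(l+x)^r}$. -/

import Mathlib

open scoped BigOperators
open MeasureTheory

/-- Multiple zeta value for an index given as a list. -/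
noncomputable def mzvL (k : List ℕ) : ℝ :=
  ∑' m : {f : Fin k.length → ℕ+ // StrictMono f},
    ∏ i, (1 : ℝ) / (((m.1 i : ℕ+) : ℕ) : ℝ) ^ (k.get i)

/-- Multiple zeta-star value for an index given as a list. -/
noncomputable def zetaStarL (k : List ℕ) : ℝ :=
  ∑' m : {f : Fin k.length → ℕ+ // Monotone f},
    ∏ i, (1 : ℝ) / (((m.1 i : ℕ+) : ℕ) : ℝ) ^ (k.get i)

/-- Riemann zeta at a natural number argument. -/
noncomputable def rz (s : ℕ) : ℝ := ∑' n : ℕ+, (1 : ℝ) / ((n : ℕ) : ℝ) ^ s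

/-- Multiple polylogarithm (single variable). -/
noncomputable def LiL (k : List ℕ) (z : ℝ) : ℝ :=
  ∑' m : {f : Fin k.length → ℕ+ // StrictMono f},
    z ^ (if h : 0 < k.length then ((m.1 ⟨k.length - 1, Nat.sub_lt h Nat.one_pos⟩ : ℕ+) : ℕ) else 0)
      / ∏ i, (((m.1 i : ℕ+) : ℕ) : ℝ) ^ (k.get i)

/-- Arakawa-Kaneko multiple zeta function. -/
noncomputable def xiL (k : List ℕ) (s : ℝ) : ℝ :=
  (1 / Real.Gamma s) *
    ∫ t in Set.Ioi (0 : ℝ), t ^ (s - 1) / (Real.exp t - 1) * LiL k (1 - Real.exp (-t))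

/-- All indices obtained from `k` by filling each box with a comma or a plus. -/
def fills : List ℕ → List (List ℕ)
  | [] => [[]]
  | [a] => [[a]]
  | a :: b :: rest => ((fills (b :: rest)).map (a :: ·)) ++ fills ((a + b) :: rest)
termination_by l => l.length

/-- Interpolated multiple zeta value (t-MZV). -/
noncomputable def zetaT (t : ℝ) (k : List ℕ) : ℝ :=
  ((fills k).map (fun k' => t ^ (k.length - k'.length) * mzvL k')).sum

/-- t-Arakawa-Kaneko multiple zeta value. -/
noncomputable def xiT (t : ℝ) (k : List ℕ) (s : ℝ) : ℝ :=
  ((fills k).map (fun k' => t ^ (k.length - k'.length) * xiL k' s)).sum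


lemma betaL {a b : ℝ} (ha : 0 < a) (hb : 0 < b) :
    ∫⁻ u in Set.Ioo (0:ℝ) 1, ENNReal.ofReal (u ^ (a-1) * (1-u)^(b-1))
      = ENNReal.ofReal (ProbabilityTheory.beta a b) := by
  have h := ProbabilityTheory.lintegral_betaPDF_eq_one ha hb
  rw [ProbabilityTheory.lintegral_betaPDF] at h
  have hp := ProbabilityTheory.beta_pos ha hb
  have : ∀ u : ℝ, ENNReal.ofReal (1 / ProbabilityTheory.beta a b * u ^ (a - 1) * (1 - u) ^ (b - 1))
     = ENNReal.ofReal (1 / ProbabilityTheory.beta a b) * ENNReal.ofReal (u ^ (a-1) * (1-u)^(b-1)) := by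
    intro u
    rw [← ENNReal.ofReal_mul (by positivity), mul_assoc]
  simp_rw [this] at h
  rw [lintegral_const_mul _ (by fun_prop)] at h
  calc _ = ENNReal.ofReal (ProbabilityTheory.beta a b) * (ENNReal.ofReal (1 / ProbabilityTheory.beta a b) * ∫⁻ u in Set.Ioo (0:ℝ) 1, ENNReal.ofReal (u ^ (a-1) * (1-u)^(b-1))) := by
        rw [← mul_assoc, ← ENNReal.ofReal_mul hp.le, mul_one_div_cancel hp.ne']; simp
    _ = _ := by rw [h, mul_one]

lemma choose_gamma {a : ℝ} (ha : 0 < a) (n : ℕ) :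
    Ring.choose (a + n - 1) n = Real.Gamma (n + a) / (n.factorial * Real.Gamma a) := by
  have h := Ring.factorial_nsmul_multichoose_eq_ascPochhammer a n
  have h1 : Ring.choose (a + n - 1) n = Ring.multichoose a n := by
    rw [Ring.choose]; congr 1; ring
  have hG := Real.Gamma_pos_of_pos ha
  have h2 : ∀ n : ℕ, (ascPochhammer ℕ n).smeval a * Real.Gamma a = Real.Gamma (n + a) := by
    intro n
    induction n with
    | zero => simp
    | succ k ih =>
      rw [ascPochhammer_succ_right, Polynomial.smeval_mul, mul_right_comm, ih]
      push_cast
      rw [show (k:ℝ) + 1 + a = (k + a) + 1 by ring, Real.Gamma_add_one (by positivity)]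
      simp [Polynomial.smeval_add, Polynomial.smeval_X, Polynomial.smeval_natCast]
      ring
  rw [h1, ← h2, ← h]
  have := n.factorial_ne_zero
  simp
  field_simp

lemma binom_sum {a u : ℝ} (ha : 0 < a) (h0 : 0 < u) (h1 : u < 1) :
    HasSum (fun n : ℕ => Real.Gamma (n + a) / (n.factorial * Real.Gamma a) * u ^ n)
      ((1 - u) ^ (-a)) := by
  have h := (Real.one_div_one_sub_rpow_hasFPowerSeriesOnBall_zero a).hasSum (y := u)
    (by simp [enorm_eq_nnnorm]; rw [← NNReal.coe_lt_coe]; simpa [abs_of_pos h0] using h1)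
  simp only [zero_add, choose_gamma ha] at h
  rw [Real.rpow_neg (by linarith), ← one_div]
  convert! h using 2 with n
  simp [mul_comm]

lemma gauss {x : ℝ} (h1 : -1 < x) (h2 : x < 1) (M : ℕ) (hM : 0 < M) :
    ∑' n : ℕ, ENNReal.ofReal (Real.Gamma (n + (1-x)) / (n.factorial * Real.Gamma (1-x)) *
      ProbabilityTheory.beta (n+1+x) (M+1-x)) = ENNReal.ofReal (ProbabilityTheory.beta (1+x) M) := by
  have hM' : (0:ℝ) < M := by exact_mod_cast hM
  have hG : 0 < Real.Gamma (1-x) := Real.Gamma_pos_of_pos (by linarith)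
  have hGn : ∀ n : ℕ, 0 < Real.Gamma (n + (1-x)) := fun n => Real.Gamma_pos_of_pos (by have : (0:ℝ) ≤ n := n.cast_nonneg
                                                                                       linarith)
  rw [← betaL (by linarith) hM']
  have : ∀ n : ℕ, ENNReal.ofReal (Real.Gamma (n + (1-x)) / (n.factorial * Real.Gamma (1-x)) *
      ProbabilityTheory.beta (n+1+x) (M+1-x)) = ∫⁻ u in Set.Ioo (0:ℝ) 1, ENNReal.ofReal
        (Real.Gamma (n + (1-x)) / (n.factorial * Real.Gamma (1-x)) * u ^ n * (u ^ x * (1-u)^(M-x))) := by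
    intro n
    have hn : (0:ℝ) ≤ n := n.cast_nonneg
    rw [ENNReal.ofReal_mul (by have := hGn n; positivity), ← betaL (by linarith) (by linarith),
      ← lintegral_const_mul _ (by fun_prop)]
    refine setLIntegral_congr_fun measurableSet_Ioo fun u hu => ?_
    rw [← ENNReal.ofReal_mul (by have := hGn n; positivity)]
    congr 1
    rw [mul_assoc, show (n:ℝ)+1+x-1 = n + x by ring, Real.rpow_add hu.1, Real.rpow_natCast,
      show (M:ℝ)+1-x-1 = M - x by ring]
    ring
  simp_rw [this]
  rw [← lintegral_tsum (fun n => by fun_prop)]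
  refine setLIntegral_congr_fun measurableSet_Ioo fun u hu => ?_
  have hu1 : 0 < 1 - u := by linarith [hu.2]
  have hs := (binom_sum (a := 1-x) (by linarith) hu.1 hu.2).mul_right (u ^ x * (1-u)^(M-x))
  rw [← ENNReal.ofReal_tsum_of_nonneg _ hs.summable, hs.tsum_eq]
  · congr 1
    rw [mul_left_comm, ← Real.rpow_add hu1]
    congr 2 <;> ring
  · intro n
    have := hGn n
    have := hu.1
    positivity

abbrev SS (n : ℕ) := {f : Fin (n+1) → ℕ+ // StrictMono f}

noncomputable def WW (x : ℝ) (n : ℕ) (g : ℕ → ENNReal) : ENNReal :=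
  ∑' m : SS n, ENNReal.ofReal (∏ i, 1 / (((m.1 i : ℕ) : ℝ) - x)) * g (m.1 (Fin.last n))

lemma strictMono_snoc' {n : ℕ} (f : Fin (n+1) → ℕ+) (a : ℕ+) :
    StrictMono (Fin.snoc (α := fun _ => ℕ+) f a : Fin (n+2) → ℕ+) ↔ StrictMono f ∧ f (Fin.last n) < a := by
  rw [Fin.strictMono_iff_lt_succ, Fin.strictMono_iff_lt_succ, Fin.forall_fin_succ']
  refine and_congr (forall_congr' fun i => ?_) ?_
  · rw [Fin.snoc_castSucc, Fin.succ_castSucc, Fin.snoc_castSucc]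
  · rw [Fin.snoc_castSucc, Fin.succ_last, Fin.snoc_last]

lemma WW_succ {x : ℝ} (hx : x < 1) (n : ℕ) (g : ℕ → ENNReal) :
    WW x (n+1) g = WW x n (fun M => ∑' a : ℕ+, if M < (a:ℕ) then
      ENNReal.ofReal (1 / (((a:ℕ):ℝ) - x)) * g a else 0) := by
  classical
  unfold WW SS
  have key : ∀ (k : ℕ) (F : (Fin k → ℕ+) → ENNReal),
      ∑' m : {f : Fin k → ℕ+ // StrictMono f}, F m.1 = ∑' f : Fin k → ℕ+, if StrictMono f then F f else 0 := by
    intro k F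
    refine (tsum_subtype {f : Fin k → ℕ+ | StrictMono f} F).trans ?_
    simp [Set.indicator_apply]
  rw [key (n+2) (fun m => ENNReal.ofReal (∏ i, 1 / (((m i : ℕ) : ℝ) - x)) * g (m (Fin.last (n+1)))),
    key (n+1) (fun m => ENNReal.ofReal (∏ i, 1 / (((m i : ℕ) : ℝ) - x)) * (∑' a : ℕ+, if (m (Fin.last n) : ℕ) < (a:ℕ) then
      ENNReal.ofReal (1 / (((a:ℕ):ℝ) - x)) * g a else 0)),
    ← (Fin.snocEquiv (fun _ : Fin (n+2) => ℕ+)).tsum_eq, ENNReal.tsum_prod', ENNReal.tsum_comm]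
  refine tsum_congr fun f => ?_
  by_cases hf : StrictMono f
  · rw [if_pos hf, ← ENNReal.tsum_mul_left]
    refine tsum_congr fun a => ?_
    have this : StrictMono ((Fin.snocEquiv fun _ : Fin (n+2) => ℕ+) (a, f)) ↔ _ := strictMono_snoc' f a
    simp only [this, Fin.snocEquiv_apply, hf, true_and, Fin.snoc_last, Fin.prod_univ_castSucc (n := n+1), Fin.snoc_castSucc, PNat.coe_lt_coe]
    split_ifs with h
    · rw [ENNReal.ofReal_mul, mul_assoc]
      refine Finset.prod_nonneg fun i _ => ?_
      have : (1:ℝ) ≤ ((f i:ℕ):ℝ) := by exact_mod_cast (f i).pos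
      exact one_div_nonneg.2 (by linarith)
    · simp
  · rw [if_neg hf]
    simp only [ENNReal.tsum_eq_zero]
    intro a
    have this : StrictMono ((Fin.snocEquiv fun _ : Fin (n+2) => ℕ+) (a, f)) ↔ _ := strictMono_snoc' f a
    simp only [this, hf, false_and, if_false]

lemma WW_zero (x : ℝ) (g : ℕ → ENNReal) :
    WW x 0 g = ∑' a : ℕ+, ENNReal.ofReal (1 / (((a:ℕ):ℝ) - x)) * g a := by
  unfold WW SS
  let e : ℕ+ ≃ {f : Fin 1 → ℕ+ // StrictMono f} :=
    { toFun := fun a => ⟨fun _ => a, Subsingleton.strictMono _⟩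
      invFun := fun f => f.1 0
      left_inv := fun a => rfl
      right_inv := fun f => by
        ext i
        have : i = 0 := Subsingleton.elim _ _
        simp [this] }
  rw [← e.tsum_eq]
  simp [e]

noncomputable def CC (x : ℝ) (a b : ℕ) : ℝ :=
  Real.Gamma (a+1-x) * Real.Gamma (b+1+x) / Real.Gamma (a+b+1)

lemma CC_pos {x : ℝ} (h : |x| ≤ 1/4) (a b : ℕ) : 0 < CC x a b := by
  obtain ⟨h1, h2⟩ := abs_le.1 h
  have : (0:ℝ) ≤ a := a.cast_nonneg
  have : (0:ℝ) ≤ b := b.cast_nonneg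
  unfold CC
  have := Real.Gamma_pos_of_pos (s := a+1-x) (by linarith)
  have := Real.Gamma_pos_of_pos (s := b+1+x) (by linarith)
  have := Real.Gamma_pos_of_pos (s := a+b+1) (by linarith)
  positivity

lemma CC_succ {x : ℝ} (h : |x| ≤ 1/4) (a b : ℕ) :
    CC x (a+1) b * (a+1+b) = CC x a b * (a+1-x) := by
  obtain ⟨h1, h2⟩ := abs_le.1 h
  have ha : (0:ℝ) ≤ a := a.cast_nonneg
  have hb : (0:ℝ) ≤ b := b.cast_nonneg
  unfold CC
  push_cast
  rw [show (a:ℝ)+1+1-x = (a+1-x)+1 by ring, Real.Gamma_add_one (s := (a+1-x)) (by linarith),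
    show (a:ℝ)+1+b+1 = (a+b+1)+1 by ring, Real.Gamma_add_one (s := (a:ℝ)+b+1) (by positivity)]
  have := (Real.Gamma_pos_of_pos (s := a+b+1) (by linarith)).ne'
  have : (a:ℝ)+b+1 ≠ 0 := by positivity
  field_simp
  ring

lemma CC_tendsto {x : ℝ} (h : |x| ≤ 1/4) (b : ℕ) (hb : 0 < b) :
    Filter.Tendsto (fun a => CC x a b) Filter.atTop (nhds 0) := by
  obtain ⟨h1, h2⟩ := abs_le.1 h
  have hb' : (1:ℝ) ≤ b := by exact_mod_cast hb
  have key : ∀ a : ℕ, (CC x a b)^2 * (a+1) ≤ (CC x 0 b)^2 := by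
    intro a
    induction a with
    | zero => simp
    | succ k ih =>
      refine le_trans ?_ ih
      have hk : (0:ℝ) ≤ k := k.cast_nonneg
      have hc := CC_succ h k b
      have hp := CC_pos h k b
      have hp' := CC_pos h (k+1) b
      have e1 : CC x (k+1) b ≤ CC x k b * ((k+5/4)/(k+2)) := by
        rw [← mul_div_assoc, le_div_iff₀ (by positivity)]
        nlinarith
      have e2 : ((k+5/4:ℝ)/(k+2))^2 * (k+1+1) ≤ k+1 := by
        rw [div_pow, div_mul_eq_mul_div, div_le_iff₀ (by positivity)]
        nlinarith
      push_cast
      calc CC x (k+1) b ^ 2 * (k+1+1) ≤ (CC x k b * ((k+5/4)/(k+2)))^2 * (k+1+1) := by gcongr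
        _ = CC x k b ^2 * (((k+5/4:ℝ)/(k+2))^2 * (k+1+1)) := by ring
        _ ≤ _ := by gcongr
  have h3 : Filter.Tendsto (fun a : ℕ => (CC x 0 b)^2 * (1 / ((a:ℝ)+1))) Filter.atTop (nhds 0) := by
    simpa using (tendsto_one_div_add_atTop_nhds_zero_nat (𝕜 := ℝ)).const_mul ((CC x 0 b)^2)
  have h4 : Filter.Tendsto (fun a : ℕ => (CC x a b)^2) Filter.atTop (nhds 0) := by
    refine squeeze_zero (fun a => sq_nonneg _) (fun a => ?_) h3
    rw [mul_one_div, le_div_iff₀ (by positivity)]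
    exact key a
  have := h4.sqrt
  simpa [Real.sqrt_sq (CC_pos h _ b).le] using this

lemma CC_sum {x : ℝ} (h : |x| ≤ 1/4) (b : ℕ) (hb : 0 < b) (M : ℕ) :
    ∑' a : ℕ+, (if M < (a:ℕ) then
      ENNReal.ofReal (1 / (((a:ℕ):ℝ) - x)) * ENNReal.ofReal (CC x a b) else 0) =
    ENNReal.ofReal (1 / (b + x)) * ENNReal.ofReal (CC x M b) := by
  obtain ⟨h1, h2⟩ := abs_le.1 h
  have hb' : (1:ℝ) ≤ b := by exact_mod_cast hb
  rw [tsum_pnat_eq_tsum_succ (f := fun a : ℕ => if M < a then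
      ENNReal.ofReal (1 / ((a:ℝ) - x)) * ENNReal.ofReal (CC x a b) else 0)]
  rw [← ENNReal.summable.sum_add_tsum_nat_add' (k := M)]
  rw [Finset.sum_eq_zero (fun i hi => by
    rw [if_neg]; have := Finset.mem_range.1 hi; omega), zero_add]
  have e : ∀ i : ℕ, (if M < i + M + 1 then ENNReal.ofReal (1 / (((i+M+1 : ℕ):ℝ) - x)) * ENNReal.ofReal (CC x (i+M+1) b) else 0)
     = ENNReal.ofReal (1 / (((i+M+1 : ℕ):ℝ) - x) * CC x (i+M+1) b) := by
    intro i
    rw [if_pos (by omega), ENNReal.ofReal_mul]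
    have : (0:ℝ) ≤ ((i+M:ℕ):ℝ) := Nat.cast_nonneg _
    push_cast at this ⊢
    exact one_div_nonneg.2 (by linarith)
  have hn : ∀ i : ℕ, 0 ≤ 1 / (((i+M+1 : ℕ):ℝ) - x) * CC x (i+M+1) b := by
    intro i
    have := CC_pos h (i+M+1) b
    have : (0:ℝ) ≤ ((i+M:ℕ):ℝ) := Nat.cast_nonneg _
    refine mul_nonneg (one_div_nonneg.2 ?_) (CC_pos h _ b).le
    push_cast at this ⊢
    linarith
  simp_rw [e]
  have hs : HasSum (fun i : ℕ => 1 / (((i+M+1 : ℕ):ℝ) - x) * CC x (i+M+1) b) (1 / (b+x) * CC x M b) := by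
    rw [hasSum_iff_tendsto_nat_of_nonneg hn]
    have hp : ∀ N : ℕ, ∑ i ∈ Finset.range N, 1 / (((i+M+1 : ℕ):ℝ) - x) * CC x (i+M+1) b = 1 / (b+x) * (CC x M b - CC x (N+M) b) := by
      intro N
      induction N with
      | zero => simp
      | succ k ih =>
        rw [Finset.sum_range_succ, ih]
        have hc := CC_succ h (k+M) b
        have hk : (0:ℝ) ≤ k := Nat.cast_nonneg _
        have hM : (0:ℝ) ≤ M := Nat.cast_nonneg _
        rw [show k + 1 + M = k + M + 1 by ring]
        push_cast at hc ⊢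
        have q1 : (k:ℝ)+M+1-x ≠ 0 := by linarith
        have q2 : (b:ℝ)+x ≠ 0 := by linarith
        field_simp
        linear_combination hc
    simp_rw [hp]
    have := ((Filter.tendsto_add_atTop_iff_nat M).2 (CC_tendsto h b hb)).const_sub (CC x M b)
    simpa using this.const_mul (1/(b+x))
  rw [← ENNReal.ofReal_tsum_of_nonneg hn hs.summable, hs.tsum_eq, ENNReal.ofReal_mul (one_div_nonneg.2 (by linarith))]

lemma WW_mul (x : ℝ) (n : ℕ) (c : ENNReal) (g : ℕ → ENNReal) :
    WW x n (fun m => c * g m) = c * WW x n g := by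
  unfold WW
  rw [← ENNReal.tsum_mul_left]
  exact tsum_congr fun m => by ring

lemma WW_CC {x : ℝ} (h : |x| ≤ 1/4) (b : ℕ) (hb : 0 < b) (n : ℕ) :
    WW x n (fun a => ENNReal.ofReal (CC x a b)) = ENNReal.ofReal (1 / (b + x)) ^ (n+1) * ENNReal.ofReal (CC x 0 b) := by
  obtain ⟨h1, h2⟩ := abs_le.1 h
  induction n with
  | zero =>
    have := CC_sum h b hb 0
    simp only [PNat.pos, if_true] at this
    rw [WW_zero, this, zero_add, pow_one]
  | succ k ih =>
    rw [WW_succ (by linarith)]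
    simp_rw [CC_sum h b hb]
    rw [WW_mul, ih]
    ring

noncomputable def TT (x : ℝ) (r l : ℕ) : ℝ := (1 / (l : ℝ)) *
          (Real.Gamma (l - x) * Real.Gamma (l + x) / (Real.Gamma l) ^ 2) *
            (1 / (l + x) ^ r)

lemma WW_beta {x : ℝ} (h : |x| ≤ 1/4) (n : ℕ) :
    WW x n (fun m => ENNReal.ofReal (ProbabilityTheory.beta (1+x) m)) =
      ∑' l : ℕ+, ENNReal.ofReal (TT x (n+1) l) := by
  obtain ⟨h1, h2⟩ := abs_le.1 h
  have hA : ∀ j : ℕ, 0 ≤ Real.Gamma (j + (1-x)) / (j.factorial * Real.Gamma (1-x)) * (1 / ((j+1:ℕ)+x)) := by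
    intro j
    have hj : (0:ℝ) ≤ j := j.cast_nonneg
    have := Real.Gamma_pos_of_pos (s := j + (1-x)) (by linarith)
    have := Real.Gamma_pos_of_pos (s := (1-x)) (by linarith)
    have : (0:ℝ) < (j+1:ℕ) + x := by push_cast; linarith
    positivity
  have e : WW x n (fun m => ENNReal.ofReal (ProbabilityTheory.beta (1+x) m)) =
     WW x n (fun m => ∑' j : ℕ, ENNReal.ofReal (Real.Gamma (j + (1-x)) / (j.factorial * Real.Gamma (1-x)) * (1 / ((j+1:ℕ)+x))) *
       ENNReal.ofReal (CC x m (j+1))) := by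
    unfold WW
    refine tsum_congr fun m => ?_
    beta_reduce
    rw [← gauss (by linarith) (by linarith) _ (m.1 (Fin.last n)).pos]
    congr 1
    refine tsum_congr fun j => ?_
    rw [← ENNReal.ofReal_mul (hA j)]
    congr 1
    rw [mul_assoc]
    congr 1
    have hj : (0:ℝ) ≤ j := j.cast_nonneg
    unfold ProbabilityTheory.beta CC
    push_cast
    have : (j:ℝ)+1+x ≠ 0 := by linarith
    rw [show (j:ℝ)+1+1+x = (j+1+x)+1 by ring, Real.Gamma_add_one this]
    rw [show (j:ℝ) + 1 + x + (((m.1 (Fin.last n) : ℕ):ℝ) + 1 - x) = ((m.1 (Fin.last n) : ℕ):ℝ) + (j+1) + 1 by ring]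
    field_simp
  rw [e]
  have e2 : WW x n (fun m => ∑' j : ℕ, ENNReal.ofReal (Real.Gamma (j + (1-x)) / (j.factorial * Real.Gamma (1-x)) * (1 / ((j+1:ℕ)+x))) *
       ENNReal.ofReal (CC x m (j+1))) = ∑' j : ℕ, ENNReal.ofReal (Real.Gamma (j + (1-x)) / (j.factorial * Real.Gamma (1-x)) * (1 / ((j+1:ℕ)+x))) * WW x n (fun m => 
       ENNReal.ofReal (CC x m (j+1))) := by
    simp_rw [← WW_mul]
    unfold WW
    simp_rw [← ENNReal.tsum_mul_left]
    rw [ENNReal.tsum_comm]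
  rw [e2, tsum_pnat_eq_tsum_succ (f := fun l : ℕ => ENNReal.ofReal (TT x (n+1) l))]
  refine tsum_congr fun j => ?_
  have hj : (0:ℝ) ≤ j := j.cast_nonneg
  have hjx : (0:ℝ) < (j+1:ℕ) + x := by push_cast; linarith
  rw [WW_CC h (j+1) (by omega), ← ENNReal.ofReal_pow (by positivity), ← ENNReal.ofReal_mul (by positivity), ← ENNReal.ofReal_mul (hA j)]
  congr 1
  unfold CC TT
  push_cast at hjx ⊢
  rw [show (j:ℝ)+1+1+x = (j+1+x)+1 by ring, Real.Gamma_add_one hjx.ne', Real.Gamma_nat_eq_factorial,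
    show (0:ℝ) + (j+1) + 1 = (j+1) + 1 by ring, Real.Gamma_add_one (s := (j:ℝ)+1) (by positivity), Real.Gamma_nat_eq_factorial,
    zero_add, show (j:ℝ) + (1 - x) = j+1-x by ring, one_div_pow]
  have := (Real.Gamma_pos_of_pos (s := (1-x)) (by linarith)).ne'
  have : (j.factorial:ℝ) ≠ 0 := by exact_mod_cast j.factorial_ne_zero
  have := hjx.ne'
  have : (j:ℝ)+1 ≠ 0 := by positivity
  field_simp

lemma TT_nonneg {x : ℝ} (h : |x| ≤ 1/4) (r j : ℕ) : 0 ≤ TT x r (j+1) := by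
  obtain ⟨h1, h2⟩ := abs_le.1 h
  have hj : (0:ℝ) ≤ j := j.cast_nonneg
  unfold TT
  push_cast
  have := Real.Gamma_pos_of_pos (s := j + 1 -x) (by linarith)
  have := Real.Gamma_pos_of_pos (s := j + 1 + x) (by linarith)
  have : (0:ℝ) < j+1 + x := by linarith
  positivity

lemma gamma_ratio {x : ℝ} (h : |x| ≤ 1/4) (j : ℕ) :
    Real.Gamma (j + 1 - x) * Real.Gamma (j + 1 + x) / (Real.Gamma (j + 1)) ^ 2 ≤
      Real.Gamma (1 - x) * Real.Gamma (1 + x) := by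
  obtain ⟨h1, h2⟩ := abs_le.1 h
  induction j with
  | zero => simp
  | succ k ih =>
    refine le_trans ?_ ih
    have hk : (0:ℝ) ≤ k := k.cast_nonneg
    push_cast
    rw [show (k:ℝ)+1+1-x = (k+1-x)+1 by ring, show (k:ℝ)+1+1+x = (k+1+x)+1 by ring,
      Real.Gamma_add_one (s := (k:ℝ)+1-x) (by linarith), Real.Gamma_add_one (s := (k:ℝ)+1+x) (by linarith),
      Real.Gamma_add_one (s := (k:ℝ)+1) (by linarith)]
    have p1 := Real.Gamma_pos_of_pos (s := k + 1 -x) (by linarith)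
    have p2 := Real.Gamma_pos_of_pos (s := k + 1 + x) (by linarith)
    have p3 := Real.Gamma_pos_of_pos (s := k + 1) (by linarith)
    rw [div_le_div_iff₀ (by positivity) (by positivity)]
    have : 0 ≤ Real.Gamma (k + 1 -x) * Real.Gamma (k+1+x) * Real.Gamma (k+1) ^ 2 := by positivity
    nlinarith [mul_nonneg this (sq_nonneg x)]

lemma TT_summable {x : ℝ} (h : |x| ≤ 1/4) (n : ℕ) : Summable (fun j : ℕ => TT x (n+1) (j+1)) := by
  obtain ⟨h1, h2⟩ := abs_le.1 h
  have hb : Summable (fun j : ℕ => (Real.Gamma (1 - x) * Real.Gamma (1 + x) * (4/3)^(n+1)) * (1 / (((j+1:ℕ):ℝ))^2)) := by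
    refine Summable.mul_left _ ?_
    exact (summable_nat_add_iff 1 (f := fun j : ℕ => 1 / ((j:ℝ))^2)).2 (Real.summable_one_div_nat_pow.2 (by norm_num))
  refine Summable.of_nonneg_of_le (fun j => TT_nonneg h _ j) (fun j => ?_) hb
  have hj : (0:ℝ) ≤ j := j.cast_nonneg
  unfold TT
  push_cast
  have hg := gamma_ratio h j
  have q1 : 1 / ((j:ℝ)+1+x)^(n+1) ≤ (4/3)^(n+1) * (1 / (j+1)) := by
    rw [pow_succ, pow_succ]
    have a1 : 1 / ((j:ℝ)+1+x) ≤ 4/3 := by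
      rw [div_le_iff₀ (by linarith)]; linarith
    have a2 : 1 / ((j:ℝ)+1+x) ≤ 4/3 * (1/(j+1)) := by
      rw [mul_one_div, div_le_div_iff₀ (by linarith) (by linarith)]; linarith
    have a0 : 0 ≤ 1 / ((j:ℝ)+1+x) := one_div_nonneg.2 (by linarith)
    calc _ = (1 / ((j:ℝ)+1+x))^n * (1 / ((j:ℝ)+1+x)) := by
            rw [one_div_pow, one_div_mul_one_div]
      _ ≤ (4/3)^n * (4/3 * (1/(j+1))) := by gcongr
      _ = _ := by ring
  have p1 := Real.Gamma_pos_of_pos (s := 1 -x) (by linarith)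
  have p2 := Real.Gamma_pos_of_pos (s := 1 + x) (by linarith)
  have : 0 ≤ 1 / ((j:ℝ)+1+x)^(n+1) := one_div_nonneg.2 (pow_nonneg (by linarith) _)
  calc _ ≤ 1 / ((j:ℝ)+1) * (Real.Gamma (1 - x) * Real.Gamma (1 + x)) * ((4/3)^(n+1) * (1 / (j+1))) := by gcongr
    _ = _ := by field_simp

lemma main_real {x : ℝ} (h : |x| ≤ 1/4) (n : ℕ) :
    ∑' m : SS n, (∏ i, 1 / (((m.1 i : ℕ) : ℝ) - x)) * ProbabilityTheory.beta (1+x) (m.1 (Fin.last n) : ℕ) =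
      ∑' l : ℕ+, TT x (n+1) l := by
  obtain ⟨h1, h2⟩ := abs_le.1 h
  have e := congrArg ENNReal.toReal (WW_beta h n)
  have hprod : ∀ m : SS n, 0 ≤ ∏ i, 1 / (((m.1 i : ℕ) : ℝ) - x) := fun m => by
      refine Finset.prod_nonneg fun i _ => ?_
      have : (1:ℝ) ≤ ((m.1 i:ℕ):ℝ) := by exact_mod_cast (m.1 i).pos
      exact one_div_nonneg.2 (by linarith)
  unfold WW at e
  rw [ENNReal.tsum_toReal_eq, ENNReal.tsum_toReal_eq] at e
  · convert! e using 3 with m l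
    · rw [ENNReal.toReal_mul, ENNReal.toReal_ofReal (hprod m), ENNReal.toReal_ofReal]
      exact (ProbabilityTheory.beta_pos (by linarith) (by exact_mod_cast (m.1 _).pos)).le
    · rw [ENNReal.toReal_ofReal]
      obtain ⟨j, hj⟩ := Nat.exists_eq_succ_of_ne_zero l.pos.ne'
      rw [hj]
      exact TT_nonneg h _ _
  · intro l; exact ENNReal.ofReal_ne_top
  · intro l; exact ENNReal.mul_ne_top ENNReal.ofReal_ne_top ENNReal.ofReal_ne_top

lemma main_summable (n : ℕ) :
    Summable fun m : SS n => (∏ i, 1 / (((m.1 i : ℕ) : ℝ) - 1/4)) * ProbabilityTheory.beta (1-1/4) (m.1 (Fin.last n) : ℕ) := by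
  have h : |(-(1/4) : ℝ)| ≤ 1/4 := by norm_num [abs_le]
  have hm : ∀ (m : SS n) i, (1:ℝ) ≤ ((m.1 i:ℕ):ℝ) := fun m i => by exact_mod_cast (m.1 i).pos
  have hbp : ∀ m : SS n, 0 ≤ ProbabilityTheory.beta (1-1/4) (m.1 (Fin.last n) : ℕ) := fun m =>
    (ProbabilityTheory.beta_pos (by norm_num) (by exact_mod_cast (m.1 _).pos)).le
  have e := WW_beta h n
  have fin : ∑' l : ℕ+, ENNReal.ofReal (TT (-(1/4)) (n+1) l) ≠ ⊤ := by
    rw [tsum_pnat_eq_tsum_succ (f := fun l : ℕ => ENNReal.ofReal (TT (-(1/4)) (n+1) l))]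
    exact (TT_summable h n).tsum_ofReal_ne_top
  rw [← e] at fin
  unfold WW at fin
  have s1 := ENNReal.summable_toReal fin
  have s2 : Summable fun m : SS n => (5/3)^(n+1) * ((∏ i, 1 / (((m.1 i : ℕ) : ℝ) + 1/4)) * ProbabilityTheory.beta (1-1/4) (m.1 (Fin.last n) : ℕ)) := by
    refine Summable.mul_left _ ?_
    convert! s1 using 2 with m
    rw [ENNReal.toReal_mul, ENNReal.toReal_ofReal, ENNReal.toReal_ofReal]
    · simp [sub_eq_add_neg]
    · simpa [sub_eq_add_neg] using hbp m
    · refine Finset.prod_nonneg fun i _ => ?_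
      have := hm m i
      exact one_div_nonneg.2 (by linarith)
  refine Summable.of_nonneg_of_le (fun m => mul_nonneg (Finset.prod_nonneg fun i _ => ?_) (hbp m)) (fun m => ?_) s2
  · have := hm m i
    exact one_div_nonneg.2 (by linarith)
  · rw [← mul_assoc]
    refine mul_le_mul_of_nonneg_right ?_ (hbp m)
    rw [← Fin.prod_const, ← Finset.prod_mul_distrib]
    refine Finset.prod_le_prod (fun i _ => ?_) (fun i _ => ?_)
    · have := hm m i
      exact one_div_nonneg.2 (by linarith)
    · have := hm m i
      rw [mul_one_div, div_le_div_iff₀ (by linarith) (by linarith)]; linarith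

noncomputable def wt (M : ℕ) (t : ℝ) : ℝ := (1 - Real.exp (-t)) ^ M / (Real.exp t - 1)

lemma wt_nonneg (M : ℕ) {t : ℝ} (ht : 0 < t) : 0 ≤ wt M t := by
  have h1 : Real.exp (-t) < 1 := by rw [Real.exp_lt_one_iff]; linarith
  have h2 : 1 < Real.exp t := by rw [Real.one_lt_exp_iff]; exact ht
  exact div_nonneg (pow_nonneg (by linarith) _) (by linarith)

@[fun_prop]
lemma wt_meas (M : ℕ) : Measurable (wt M) := by unfold wt; fun_prop

lemma wt_lint {x : ℝ} (h : |x| ≤ 1/4) (M : ℕ) (hM : 0 < M) :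
    ∫⁻ t in Set.Ioi (0:ℝ), ENNReal.ofReal (Real.exp (-x*t) * wt M t) =
      ENNReal.ofReal (ProbabilityTheory.beta (1+x) M) := by
  obtain ⟨h1, h2⟩ := abs_le.1 h
  have hM' : (0:ℝ) < M := by exact_mod_cast hM
  have comm : ProbabilityTheory.beta (1+x) M = ProbabilityTheory.beta M (1+x) := by
    unfold ProbabilityTheory.beta; rw [mul_comm, add_comm (M:ℝ)]
  rw [comm, ← betaL hM' (by linarith)]
  have himg : (fun t : ℝ => 1 - Real.exp (-t)) '' Set.Ioi 0 = Set.Ioo 0 1 := by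
    ext v
    constructor
    · rintro ⟨t, ht, rfl⟩
      have ht : 0 < t := ht
      have h1 : Real.exp (-t) < 1 := by rw [Real.exp_lt_one_iff]; linarith
      exact ⟨by simp [ht], by simp [Real.exp_pos]⟩
    · rintro ⟨h0, h1⟩
      refine ⟨-Real.log (1-v), ?_, ?_⟩
      · have := Real.log_neg (x := 1 - v) (by linarith) (by linarith)
        simpa using this
      · simp [Real.exp_log (show 0 < 1 - v by linarith)]
  rw [← himg, lintegral_image_eq_lintegral_abs_deriv_mul (f' := fun t => Real.exp (-t)) measurableSet_Ioi]
  · refine setLIntegral_congr_fun measurableSet_Ioi fun t ht => ?_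
    have ht : 0 < t := ht
    have h1 : Real.exp (-t) < 1 := by rw [Real.exp_lt_one_iff]; linarith
    have h2 : 1 < Real.exp t := by rw [Real.one_lt_exp_iff]; exact ht
    beta_reduce
    rw [← ENNReal.ofReal_mul (abs_nonneg _), abs_of_pos (Real.exp_pos _)]
    congr 1
    obtain ⟨k, rfl⟩ := Nat.exists_eq_succ_of_ne_zero hM.ne'
    unfold wt
    rw [show ((k.succ : ℕ):ℝ) - 1 = k by push_cast; ring, Real.rpow_natCast,
      show 1 - (1 - Real.exp (-t)) = Real.exp (-t) by ring, show 1 + x - 1 = x by ring,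
      ← Real.exp_mul, show -t * x = -x*t by ring, Nat.succ_eq_add_one, pow_succ]
    have : 1 - Real.exp (-t) = Real.exp (-t) * (Real.exp t - 1) := by
      rw [mul_sub, ← Real.exp_add]; simp
    have h3 : Real.exp t - 1 ≠ 0 := by linarith
    rw [mul_div_assoc, this]
    field_simp
  · intro t ht
    have : HasDerivAt (fun t : ℝ => 1 - Real.exp (-t)) (Real.exp (-t)) t := by
      have := ((hasDerivAt_neg t).exp).const_sub 1
      simpa using this
    exact this.hasDerivWithinAt
  · intro a _ b _ hab
    simpa using hab

lemma wt_integrable {x : ℝ} (h : |x| ≤ 1/4) (M : ℕ) (hM : 0 < M) :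
    Integrable (fun t => Real.exp (-x*t) * wt M t) (volume.restrict (Set.Ioi (0:ℝ))) := by
  refine ⟨by fun_prop, ?_⟩
  rw [hasFiniteIntegral_iff_ofReal, wt_lint h M hM]
  · exact ENNReal.ofReal_lt_top
  · refine (ae_restrict_mem measurableSet_Ioi).mono fun t ht => ?_
    exact mul_nonneg (Real.exp_pos _).le (wt_nonneg M ht)

lemma wt_integral {x : ℝ} (h : |x| ≤ 1/4) (M : ℕ) (hM : 0 < M) :
    ∫ t in Set.Ioi (0:ℝ), Real.exp (-x*t) * wt M t = ProbabilityTheory.beta (1+x) M := by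
  obtain ⟨h1, h2⟩ := abs_le.1 h
  rw [integral_eq_lintegral_of_nonneg_ae, wt_lint h M hM, ENNReal.toReal_ofReal]
  · exact (ProbabilityTheory.beta_pos (by linarith) (by exact_mod_cast hM)).le
  · refine (ae_restrict_mem measurableSet_Ioi).mono fun t ht => ?_
    exact mul_nonneg (Real.exp_pos _).le (wt_nonneg M ht)
  · fun_prop

noncomputable def PP (j M : ℕ) : ℝ := ∫ t in Set.Ioi (0:ℝ), t ^ j / j.factorial * wt M t

lemma PP_nonneg (j M : ℕ) : 0 ≤ PP j M := by
  refine setIntegral_nonneg measurableSet_Ioi fun t ht => ?_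
  have ht : 0 < t := ht
  exact mul_nonneg (by positivity) (wt_nonneg M ht)

lemma PP_integrable (j M : ℕ) (hM : 0 < M) :
    Integrable (fun t => t ^ j / j.factorial * wt M t) (volume.restrict (Set.Ioi (0:ℝ))) := by
  have h : |(-(1/4) : ℝ)| ≤ 1/4 := by norm_num [abs_le]
  refine Integrable.mono' ((wt_integrable h M hM).const_mul (4^j)) (by fun_prop) ?_
  refine (ae_restrict_mem measurableSet_Ioi).mono fun t ht => ?_
  have ht : 0 < t := ht
  have hw := wt_nonneg M ht
  rw [Real.norm_of_nonneg (by positivity), ← mul_assoc]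
  refine mul_le_mul_of_nonneg_right ?_ hw
  have := Real.pow_div_factorial_le_exp (t/4) (by positivity) j
  calc t ^ j / j.factorial = 4^j * ((t/4)^j / j.factorial) := by rw [div_pow]; field_simp
    _ ≤ 4^j * Real.exp (t/4) := by gcongr
    _ = _ := by congr 2; ring

lemma PP_hasSum {z : ℝ} (h : |z| ≤ 1/4) (M : ℕ) (hM : 0 < M) :
    HasSum (fun j => z ^ j * PP j M) (ProbabilityTheory.beta (1-z) M) := by
  have h' : |-z| ≤ 1/4 := by rwa [abs_neg]
  have hq : |(-(1/4) : ℝ)| ≤ 1/4 := by norm_num [abs_le]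
  have hexp : ∀ t : ℝ, HasSum (fun j : ℕ => t ^ j / j.factorial) (Real.exp t) := by
    intro t
    rw [Real.exp_eq_exp_ℝ]
    exact NormedSpace.expSeries_div_hasSum_exp t
  have hF : ∀ (z t : ℝ), HasSum (fun j : ℕ => z^j * (t ^ j / j.factorial * wt M t)) (Real.exp (z*t) * wt M t) := by
    intro z t
    convert! (hexp (z*t)).mul_right (wt M t) using 2 with j
    rw [mul_pow]; ring
  have := hasSum_integral_of_dominated_convergence (μ := volume.restrict (Set.Ioi (0:ℝ)))
    (F := fun (j : ℕ) t => z^j * (t ^ j / j.factorial * wt M t)) (f := fun t => Real.exp (z*t) * wt M t)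
    (fun j t => (1/4)^j * (t ^ j / j.factorial * wt M t))
    (fun j => by fun_prop) ?_ ?_ ?_ ?_
  · have e := wt_integral h' M hM
    simp only [neg_neg] at e
    rw [e] at this
    simp only [integral_const_mul] at this
    exact this
  · intro j
    refine (ae_restrict_mem measurableSet_Ioi).mono fun t ht => ?_
    have ht : 0 < t := ht
    have hw := wt_nonneg M ht
    rw [norm_mul, norm_pow, Real.norm_eq_abs z, Real.norm_of_nonneg (r := _ * _) (by positivity)]
    gcongr
  · exact Filter.Eventually.of_forall fun t => (hF _ t).summable
  · simp only [fun t => (hF (1/4) t).tsum_eq]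
    simpa using wt_integrable hq M hM
  · exact Filter.Eventually.of_forall fun t => hF z t

lemma mul_helper {ι κ : Type*} (f : ι → ℝ) (g : κ → ℝ) (hf : Summable fun k => ‖f k‖) (hg : Summable fun k => ‖g k‖) :
    (Summable fun p : ι × κ => ‖f p.1 * g p.2‖) ∧ ∑' p : ι × κ, f p.1 * g p.2 = (∑' k, f k) * ∑' k, g k :=
  ⟨hf.mul_norm hg, (tsum_mul_tsum_of_summable_norm hf hg).symm⟩

lemma pi_sum : ∀ (N : ℕ) (a : Fin N → ℕ → ℝ), (∀ i, Summable fun k => ‖a i k‖) →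
    (Summable fun f : Fin N → ℕ => ‖∏ i, a i (f i)‖) ∧
      ∑' f : Fin N → ℕ, ∏ i, a i (f i) = ∏ i, ∑' k, a i k := by
  intro N
  induction N with
  | zero =>
    intro a _
    refine ⟨(hasSum_fintype _).summable, by simp⟩
  | succ N ih =>
    intro a ha
    obtain ⟨i1, i2⟩ := ih (fun i => a i.succ) (fun i => ha i.succ)
    let E : ℕ × (Fin N → ℕ) ≃ (Fin (N+1) → ℕ) := Fin.consEquiv (fun _ => ℕ)
    have hE0 : ∀ p, E p 0 = p.1 := fun p => rfl
    have hEs : ∀ p i, E p (Fin.succ i) = p.2 i := fun p i => rfl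
    have e : ∀ p : ℕ × (Fin N → ℕ), ∏ i, a i (E p i) = a 0 p.1 * ∏ i, a i.succ (p.2 i) := by
      intro p
      rw [Fin.prod_univ_succ, hE0]
      simp only [hEs]
    clear_value E
    have H := mul_helper (a 0) (fun q : Fin N → ℕ => ∏ i : Fin N, a i.succ (q i)) (ha 0) i1
    constructor
    · rw [← E.summable_iff]
      simp only [Function.comp_def, e]
      exact H.1
    · rw [← E.tsum_eq]
      simp only [e]
      rw [Fin.prod_univ_succ, ← i2]
      exact H.2

noncomputable def Phi (n : ℕ) (x z : ℝ) (m : SS n) (f : Fin (n+2) → ℕ) : ℝ :=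
  (∏ i : Fin (n+1), x ^ (f i.castSucc) / ((m.1 i : ℕ) : ℝ) ^ (f i.castSucc + 1)) *
    (z ^ (f (Fin.last (n+1))) * PP (f (Fin.last (n+1))) (m.1 (Fin.last n)))

lemma Phi_sum (n : ℕ) {x z : ℝ} (hx : |x| ≤ 1/4) (hz : |z| ≤ 1/4) (m : SS n) :
    (Summable fun f => ‖Phi n x z m f‖) ∧
      ∑' f, Phi n x z m f = (∏ i, 1 / (((m.1 i : ℕ) : ℝ) - x)) * ProbabilityTheory.beta (1-z) (m.1 (Fin.last n) : ℕ) := by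
  let a : Fin (n+2) → ℕ → ℝ := Fin.snoc (α := fun _ => ℕ → ℝ)
    (fun i k => x ^ k / ((m.1 i : ℕ) : ℝ) ^ (k+1)) (fun k => z ^ k * PP k (m.1 (Fin.last n)))
  have geo : ∀ i (x : ℝ), |x| ≤ 1/4 → HasSum (fun k => x ^ k / ((m.1 i : ℕ) : ℝ) ^ (k+1)) (1 / (((m.1 i : ℕ) : ℝ) - x)) := by
    intro i x hx
    have h1 : (1:ℝ) ≤ ((m.1 i:ℕ):ℝ) := by exact_mod_cast (m.1 i).pos
    have h2 : |x / ((m.1 i : ℕ) : ℝ)| < 1 := by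
      rw [abs_div, div_lt_one (by positivity), abs_of_pos (by positivity : (0:ℝ) < ((m.1 i : ℕ) : ℝ))]
      linarith
    have h3 := (hasSum_geometric_of_abs_lt_one h2).mul_right (1 / ((m.1 i : ℕ) : ℝ))
    obtain ⟨h4, h5⟩ := abs_le.1 hx
    convert! h3 using 1
    · ext k; rw [div_pow, pow_succ]; field_simp
    · have : ((m.1 i : ℕ) : ℝ) - x ≠ 0 := by linarith
      have : ((m.1 i : ℕ) : ℝ) ≠ 0 := by linarith
      field_simp
  have ha : ∀ i, Summable fun k => ‖a i k‖ := by
    intro i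
    refine Fin.lastCases ?_ (fun i => ?_) i
    · simp only [a, Fin.snoc_last]
      have := (PP_hasSum (z := |z|) (by rwa [abs_abs]) _ (m.1 (Fin.last n)).pos).summable
      convert! this using 2 with k
      rw [norm_mul, norm_pow, Real.norm_eq_abs z, Real.norm_of_nonneg (PP_nonneg _ _)]
    · simp only [a, Fin.snoc_castSucc]
      have := (geo i |x| (by rwa [abs_abs])).summable
      convert! this using 2 with k
      simp
  have hP : ∀ f, Phi n x z m f = ∏ i, a i (f i) := by
    intro f
    rw [Fin.prod_univ_castSucc]
    simp only [a, Fin.snoc_last, Fin.snoc_castSucc, Phi]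
  obtain ⟨r1, r2⟩ := pi_sum _ a ha
  refine ⟨by simpa only [hP] using r1, ?_⟩
  simp only [hP]
  rw [r2, Fin.prod_univ_castSucc]
  simp only [a, Fin.snoc_last, Fin.snoc_castSucc]
  rw [(PP_hasSum hz _ (m.1 (Fin.last n)).pos).tsum_eq]
  simp only [fun i => (geo i x hx).tsum_eq]

lemma Phi_nonneg (n : ℕ) {x z : ℝ} (hx : 0 ≤ x) (hz : 0 ≤ z) (m : SS n) (f : Fin (n+2) → ℕ) :
    0 ≤ Phi n x z m f := by
  unfold Phi
  have := PP_nonneg (f (Fin.last (n+1))) (m.1 (Fin.last n))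
  positivity

lemma Psi_summable (n : ℕ) : Summable fun p : SS n × (Fin (n+2) → ℕ) => Phi n (1/4) (1/4) p.1 p.2 := by
  have hq : |((1/4) : ℝ)| ≤ 1/4 := by norm_num [abs_le]
  rw [summable_prod_of_nonneg (fun p => Phi_nonneg n (by norm_num) (by norm_num) _ _)]
  refine ⟨fun m => (Phi_sum n hq hq m).1.of_norm, ?_⟩
  simp only [fun m => (Phi_sum n hq hq m).2]
  exact main_summable n

lemma Phi_summable (n : ℕ) {x z : ℝ} (hx : |x| ≤ 1/4) (hz : |z| ≤ 1/4) :
    Summable fun p : SS n × (Fin (n+2) → ℕ) => Phi n x z p.1 p.2 := by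
  refine Summable.of_norm_bounded (Psi_summable n) fun p => ?_
  unfold Phi
  have := PP_nonneg (p.2 (Fin.last (n+1))) (p.1.1 (Fin.last n))
  rw [norm_mul, norm_mul, norm_pow, Real.norm_eq_abs z, Real.norm_of_nonneg this, norm_prod]
  gcongr with i
  rw [norm_div, norm_pow, Real.norm_eq_abs x, Real.norm_of_nonneg (by positivity)]
  gcongr

lemma LiL_eq {n : ℕ} (k : List ℕ) (h : k.length = n+1) (z : ℝ) :
    LiL k z = ∑' m : SS n, z ^ ((m.1 (Fin.last n) : ℕ)) /
      ∏ i : Fin (n+1), ((m.1 i : ℕ) : ℝ) ^ (k.get (Fin.cast h.symm i)) := by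
  unfold LiL
  let e : {f : Fin k.length → ℕ+ // StrictMono f} ≃ SS n :=
    { toFun := fun f => ⟨fun i => f.1 (Fin.cast h.symm i), fun i j hij => f.2 hij⟩
      invFun := fun f => ⟨fun i => f.1 (Fin.cast h i), fun i j hij => f.2 hij⟩
      left_inv := fun f => by ext i; simp
      right_inv := fun f => by ext i; simp }
  rw [← e.tsum_eq]
  refine tsum_congr fun m => ?_
  rw [dif_pos (by omega)]
  congr 1
  · have : (⟨k.length - 1, Nat.sub_lt (by omega) Nat.one_pos⟩ : Fin k.length) = Fin.cast h.symm (Fin.last n) := by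
      ext; simp [h]
    rw [this]
    rfl
  · rw [← (finCongr h.symm).prod_comp]
    rfl

lemma xiL_eq {n : ℕ} (x : ℝ) (f : Fin (n+2) → ℕ) :
    (-1 : ℝ) ^ (f (Fin.last (n+1))) *
      xiL (List.ofFn fun i : Fin (n+1) => f i.castSucc + 1) ((f (Fin.last (n+1)) : ℝ) + 1) * x ^ (∑ i, f i) =
    ∑' m : SS n, Phi n x (-x) m f := by
  set j := f (Fin.last (n+1)) with hj
  let c : SS n → ℝ := fun m => ∏ i : Fin (n+1), 1 / ((m.1 i : ℕ) : ℝ) ^ (f i.castSucc + 1)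
  have hc : ∀ m, 0 ≤ c m := fun m => Finset.prod_nonneg fun i _ => by positivity
  have hPhi : ∀ (x z : ℝ) (m : SS n), Phi n x z m f = (x ^ (∑ i : Fin (n+1), f i.castSucc) * z ^ j) * (c m * PP j (m.1 (Fin.last n))) := by
    intro x z m
    simp only [Phi, c, ← hj]
    rw [← Finset.prod_pow_eq_pow_sum]
    simp only [div_eq_mul_one_div (x ^ _), Finset.prod_mul_distrib]
    ring
  have hs : Summable fun m : SS n => c m * PP j (m.1 (Fin.last n)) := by
    have h1 := (Psi_summable n).comp_injective (i := fun m : SS n => (m, f)) (fun a b hab => (Prod.mk.inj hab).1)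
    simp only [Function.comp_def, hPhi] at h1
    refine (summable_mul_left_iff ?_).1 h1
    positivity
  have hxi : xiL (List.ofFn fun i : Fin (n+1) => f i.castSucc + 1) ((j : ℝ) + 1) = ∑' m : SS n, c m * PP j (m.1 (Fin.last n)) := by
    unfold xiL
    rw [← integral_const_mul]
    have h2 := integral_tsum_of_summable_integral_norm (μ := volume.restrict (Set.Ioi (0:ℝ)))
      (F := fun (m : SS n) t => c m * (t ^ j / j.factorial * wt (m.1 (Fin.last n)) t))
      (fun m => (PP_integrable j _ (m.1 (Fin.last n)).pos).const_mul _) ?_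
    · simp only [integral_const_mul] at h2
      unfold PP
      rw [h2]
      refine setIntegral_congr_fun measurableSet_Ioi fun t ht => ?_
      beta_reduce
      rw [LiL_eq _ (List.length_ofFn), ← tsum_mul_left, ← tsum_mul_left]
      refine tsum_congr fun m => ?_
      rw [Real.Gamma_nat_eq_factorial, show (j:ℝ)+1-1 = j by ring, Real.rpow_natCast]
      simp only [c, wt, List.get_ofFn, Finset.prod_div_distrib, Finset.prod_const_one]
      have : ∀ i : Fin (n+1), Fin.cast (List.length_ofFn (f := fun i : Fin (n+1) => f i.castSucc + 1)) (Fin.cast (List.length_ofFn (f := fun i : Fin (n+1) => f i.castSucc + 1)).symm i) = i := fun i => rfl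
      simp only [this]
      ring
    · convert! hs using 2 with m
      unfold PP
      rw [← integral_const_mul]
      refine setIntegral_congr_fun measurableSet_Ioi fun t ht => ?_
      have ht : 0 < t := ht
      have := wt_nonneg (m.1 (Fin.last n)) ht
      have := hc m
      exact Real.norm_of_nonneg (by positivity)
  rw [hxi]
  simp only [hPhi]
  rw [tsum_mul_left, Fin.sum_univ_castSucc, ← hj, pow_add, neg_pow x]
  ring

lemma final (n : ℕ) {x : ℝ} (h : |x| ≤ 1/4) :
      ∑' k : ℕ,
          (∑ f ∈ Finset.Nat.antidiagonalTuple (n + 1 + 1) k,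
            (-1 : ℝ) ^ (f (Fin.last (n+1))) *
              xiL (List.ofFn fun i : Fin (n+1) => f i.castSucc + 1) ((f (Fin.last (n+1)) : ℝ) + 1))
            * x ^ k = ∑' l : ℕ+, TT x (n+1) l := by
  have h' : |-x| ≤ 1/4 := by rwa [abs_neg]
  have hS := Phi_summable n h h'
  have hS' : Summable fun p : (Fin (n+2) → ℕ) × SS n => Phi n x (-x) p.2 p.1 := hS.prod_symm
  have hA : Summable fun f => ∑' m : SS n, Phi n x (-x) m f := hS'.prod
  rw [← main_real h n]
  have e1 : ∀ m : SS n, (∏ i, 1 / (((m.1 i : ℕ) : ℝ) - x)) * ProbabilityTheory.beta (1+x) (m.1 (Fin.last n) : ℕ) = ∑' f, Phi n x (-x) m f := by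
    intro m
    rw [(Phi_sum n h h' m).2, sub_neg_eq_add]
  simp only [e1]
  rw [Summable.tsum_comm (f := fun f m => Phi n x (-x) m f) hS']
  let E := Finset.Nat.sigmaAntidiagonalTupleEquivTuple (n+2)
  have hA' := E.summable_iff.2 hA
  rw [← E.tsum_eq]
  rw [Summable.tsum_sigma' (f := fun p => ∑' m : SS n, Phi n x (-x) m (E p)) (fun k => (hasSum_fintype _).summable) hA']
  refine tsum_congr fun k => ?_
  rw [tsum_fintype, Finset.sum_mul, ← Finset.sum_coe_sort]
  refine Finset.sum_congr rfl fun f _ => ?_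
  have hf := Finset.Nat.mem_antidiagonalTuple.1 f.2
  have hx := xiL_eq x f.1
  rw [hf] at hx
  exact hx

theorem stmt8 (r m : ℕ) (hr : 1 ≤ r) :
    ∃ ε > (0 : ℝ), ∀ x : ℝ, |x| < ε →
      ∑' k : ℕ,
          (∑ f ∈ Finset.Nat.antidiagonalTuple (r + 1) k,
            (-1 : ℝ) ^ (f (Fin.last r)) *
              xiL (List.ofFn fun i : Fin r => f i.castSucc + 1) ((f (Fin.last r) : ℝ) + 1))
            * x ^ k =
        ∑' l : ℕ+, (1 / ((l : ℕ) : ℝ)) *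
          (Real.Gamma ((l : ℕ) - x) * Real.Gamma ((l : ℕ) + x) / (Real.Gamma (l : ℕ)) ^ 2) *
            (1 / ((l : ℕ) + x) ^ r) := by
  obtain ⟨n, rfl⟩ : ∃ n, r = n + 1 := ⟨r - 1, by omega⟩
  exact ⟨1/4, by norm_num, fun x hx => final n hx.le⟩
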